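/- arXiv:2010.03217 — 11 statements merged into one kernel-verified Lean document; each statement's English description precedes it below -/
import Mathlib

section
/- Let a, a' : ℕ → ℝ be two sequences of real numbers with |a i| ≤ 1 and |a' i| ≤ 1 for all i ≥ 1. Define real numbers M and M' recursively by M 1 = a 1, M' 1 = a' 1, and for n ≥ 1, M (n+1) = (1/2) * M n * (a (n+1) + a' (n+1)) + (1/2) * M' n * (a (n+1) - a' (n+1)) and M' (n+1) = (1/2) * M' n * (a' (n+1) + a (n+1)) + (1/2) * M n * (a' (n+1) - a (n+1)). Then for every n ≥ 1, |M n| ≤ 1 and |M' n| ≤ 1. (This is the local-realism bound ⟨M_n⟩_LR ≤ 1 for Mermin's polynomials.) -/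
/-! Both recursions have the form `x (u + v) / 2 + y (u - v) / 2` with `x, y` the previous values
and `u, v ∈ [-1, 1]`. Since `|u + v| + |u - v| = 2 max |u| |v| ≤ 2`, such an expression has absolute
value at most `1` whenever `|x|, |y| ≤ 1` (`abs_mermin_step_le_one`), and the bound propagates by
induction. -/

theorem abs_mermin_step_le_one {x y u v : ℝ} (hx : |x| ≤ 1) (hy : |y| ≤ 1)
    (hu : |u| ≤ 1) (hv : |v| ≤ 1) :
    |(1/2) * x * (u + v) + (1/2) * y * (u - v)| ≤ 1 := by
  have hsum : |u + v| + |u - v| ≤ 2 := by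
    rw [abs_le] at hu hv
    rcases abs_cases (u + v) with h | h <;> rcases abs_cases (u - v) with h' | h' <;> linarith
  have hxs : |x * (u + v)| ≤ |u + v| := by
    rw [abs_mul]
    exact mul_le_of_le_one_left (abs_nonneg _) hx
  have hyd : |y * (u - v)| ≤ |u - v| := by
    rw [abs_mul]
    exact mul_le_of_le_one_left (abs_nonneg _) hy
  rw [abs_le] at hxs hyd ⊢
  constructor <;> linarith

/-- Local-realism bound for Mermin's polynomials: if the observables take
deterministic values in `[-1, 1]`, then the Mermin polynomials `M n`, `M' n`
defined by the usual recursion satisfy `|M n| ≤ 1` and `|M' n| ≤ 1`. -/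
theorem mermin_local_realism_bound
    (a a' M M' : ℕ → ℝ)
    (ha : ∀ i, 1 ≤ i → |a i| ≤ 1)
    (ha' : ∀ i, 1 ≤ i → |a' i| ≤ 1)
    (hM1 : M 1 = a 1)
    (hM'1 : M' 1 = a' 1)
    (hM : ∀ n, 1 ≤ n →
      M (n + 1) = (1/2) * M n * (a (n+1) + a' (n+1)) + (1/2) * M' n * (a (n+1) - a' (n+1)))
    (hM' : ∀ n, 1 ≤ n →
      M' (n + 1) = (1/2) * M' n * (a' (n+1) + a (n+1)) + (1/2) * M n * (a' (n+1) - a (n+1))) :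
    ∀ n, 1 ≤ n → |M n| ≤ 1 ∧ |M' n| ≤ 1 := by
  intro n hn
  induction n, hn using Nat.le_induction with
  | base => exact ⟨hM1 ▸ ha 1 le_rfl, hM'1 ▸ ha' 1 le_rfl⟩
  | succ n hn ih =>
    have hu := ha (n + 1) n.succ_pos
    have hv := ha' (n + 1) n.succ_pos
    rw [hM n hn, hM' n hn]
    exact ⟨abs_mermin_step_le_one ih.1 ih.2 hu hv, abs_mermin_step_le_one ih.2 ih.1 hv hu⟩
end

section
/- With the same setup as the quantum Mermin bound (Bloch observables a_i, a_i' built from Pauli matrices with real unit Bloch vectors, and Mermin operators M_n, M_n' of size 2^n × 2^n defined by the Kronecker-product recursion), for every n ≥ 1 and every unit vector ψ ∈ ℂ^{2^n} one has ⟨ψ, M_n ψ⟩² + ⟨ψ, M_n' ψ⟩² ≤ 2^n. (This is the bound underlying the invariant μ̃(ψ) = Max(⟨ψ|M_n|ψ⟩² + ⟨ψ|M_n'|ψ⟩²) ≤ 2^n; for n = 4 the maximum possible value is 8.) -/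
/-!
Write `N v = ∑ ‖v i‖²`. The operators satisfy `N (M_n v) ≤ 2 ^ (n - 1) * N v`, and the same for
`M_n'`, so by Cauchy–Schwarz each of the two squared expectations on a unit vector is at most
`2 ^ (n - 1)`.

The operator bound is an induction on `n`. A Bloch observable is an isometry
(`IsBloch.sqNorm_mulVec`), so the parallelogram law makes the half sum `p` and half difference `q`
of two of them satisfy `N (p w) + N (q w) = N w`. If `A` and `B` both satisfy the bound with
constant `K`, then `N ((A ⊗ p + B ⊗ q) v) ≤ 2 N ((A ⊗ p) v) + 2 N ((B ⊗ q) v)`, which is at most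
`2 K (N ((1 ⊗ p) v) + N ((1 ⊗ q) v)) = 2 K N v`: each step costs exactly a factor `2`.
-/

open Matrix Kronecker

/-- The Pauli matrices. -/
noncomputable def PauliX : Matrix (Fin 2) (Fin 2) ℂ := !![0, 1; 1, 0]
noncomputable def PauliY : Matrix (Fin 2) (Fin 2) ℂ := !![0, -Complex.I; Complex.I, 0]
noncomputable def PauliZ : Matrix (Fin 2) (Fin 2) ℂ := !![1, 0; 0, -1]

/-- A Bloch observable `α X + β Y + γ Z` with real unit Bloch vector. -/
def IsBloch (m : Matrix (Fin 2) (Fin 2) ℂ) : Prop :=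
  ∃ α β γ : ℝ, α ^ 2 + β ^ 2 + γ ^ 2 = 1 ∧
    m = (α : ℂ) • PauliX + (β : ℂ) • PauliY + (γ : ℂ) • PauliZ

/-- Reindexing `Fin (2 ^ n) × Fin 2 ≃ Fin (2 ^ (n + 1))`. -/
def qubitEquiv (n : ℕ) : Fin (2 ^ n) × Fin 2 ≃ Fin (2 ^ (n + 1)) :=
  finProdFinEquiv.trans (finCongr (pow_succ 2 n).symm)

/-- The squared Euclidean norm `∑ ‖v i‖²` of a complex vector indexed by a finite type. -/
noncomputable def sqNorm {ι : Type*} [Fintype ι] (v : ι → ℂ) : ℝ := ∑ i, ‖v i‖ ^ 2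

lemma IsBloch.sqNorm_mulVec {a : Matrix (Fin 2) (Fin 2) ℂ} (ha : IsBloch a) (w : Fin 2 → ℂ) :
    sqNorm (a *ᵥ w) = sqNorm w := by
  obtain ⟨α, β, γ, h, rfl⟩ := ha
  simp only [sqNorm, Fin.sum_univ_two, Complex.sq_norm, Complex.normSq_apply, PauliX, PauliY,
    PauliZ, Matrix.mulVec, dotProduct]
  simp
  linear_combination ((w 0).re ^ 2 + (w 0).im ^ 2 + (w 1).re ^ 2 + (w 1).im ^ 2) * h

lemma parallelogram (x y : ℂ) :
    ‖(1/2 : ℂ) * (x + y)‖ ^ 2 + ‖(1/2 : ℂ) * (x - y)‖ ^ 2 = (‖x‖ ^ 2 + ‖y‖ ^ 2) / 2 := by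
  have := parallelogram_law_with_norm ℝ x y
  rw [norm_mul, norm_mul]
  norm_num
  linarith

lemma sqNorm_half_sum_add_half_diff {a b : Matrix (Fin 2) (Fin 2) ℂ} (ha : IsBloch a)
    (hb : IsBloch b) (w : Fin 2 → ℂ) :
    sqNorm (((1/2 : ℂ) • (a + b)) *ᵥ w) + sqNorm (((1/2 : ℂ) • (a - b)) *ᵥ w) = sqNorm w := by
  have h1 := ha.sqNorm_mulVec w
  have h2 := hb.sqNorm_mulVec w
  simp only [Matrix.smul_mulVec, Matrix.add_mulVec, Matrix.sub_mulVec]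
  simp only [sqNorm, Pi.smul_apply, Pi.add_apply, Pi.sub_apply, smul_eq_mul] at *
  rw [← Finset.sum_add_distrib]
  simp only [parallelogram]
  rw [← Finset.sum_div, Finset.sum_add_distrib, h1, h2]
  ring

lemma sqNorm_add_le {ι : Type*} [Fintype ι] (x y : ι → ℂ) :
    sqNorm (x + y) ≤ 2 * sqNorm x + 2 * sqNorm y := by
  simp only [sqNorm, Finset.mul_sum, ← Finset.sum_add_distrib, Pi.add_apply]
  refine Finset.sum_le_sum fun i _ => ?_
  have := norm_add_le (x i) (y i)
  nlinarith [norm_nonneg (x i + y i), sq_nonneg (‖x i‖ - ‖y i‖)]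

/-- An operator acting on the first tensor factor keeps its norm bound: on the right is
`K` times the squared norm of `(1 ⊗ p) v`, computed slice by slice. -/
lemma sqNorm_kronecker_mulVec_le {ι κ : Type*} [Fintype ι] [Fintype κ] {A : Matrix ι ι ℂ} {K : ℝ}
    (hA : ∀ v, sqNorm (A *ᵥ v) ≤ K * sqNorm v) (p : Matrix κ κ ℂ) (v : ι × κ → ℂ) :
    sqNorm ((A ⊗ₖ p) *ᵥ v) ≤ K * ∑ k, sqNorm (p *ᵥ fun l => v (k, l)) := by
  have h (i : ι) (j : κ) :
      ((A ⊗ₖ p) *ᵥ v) (i, j) = (A *ᵥ fun k => (p *ᵥ fun l => v (k, l)) j) i := by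
    simp only [Matrix.mulVec, dotProduct, Fintype.sum_prod_type, Matrix.kroneckerMap_apply,
      Finset.mul_sum, mul_assoc]
  calc sqNorm ((A ⊗ₖ p) *ᵥ v)
      = ∑ j, sqNorm (A *ᵥ fun k => (p *ᵥ fun l => v (k, l)) j) := by
        simp only [sqNorm, Fintype.sum_prod_type, h]
        exact Finset.sum_comm
    _ ≤ ∑ j, K * sqNorm (fun k => (p *ᵥ fun l => v (k, l)) j) :=
        Finset.sum_le_sum fun j _ => hA _
    _ = K * ∑ k, sqNorm (p *ᵥ fun l => v (k, l)) := by
        rw [← Finset.mul_sum]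
        simp only [sqNorm]
        rw [Finset.sum_comm]

lemma sqNorm_reindex_mulVec {ι κ : Type*} [Fintype ι] [Fintype κ] (e : ι ≃ κ) (A : Matrix ι ι ℂ)
    (v : κ → ℂ) : sqNorm (Matrix.reindex e e A *ᵥ v) = sqNorm (A *ᵥ (v ∘ e)) := by
  rw [Matrix.reindex_apply, Matrix.submatrix_mulVec_equiv, Equiv.symm_symm]
  exact Equiv.sum_comp e.symm fun i => ‖(A *ᵥ (v ∘ e)) i‖ ^ 2

/-- One step of the Mermin recursion doubles the bound on the squared operator norm. -/
lemma sqNorm_mermin_step {ι κ : Type*} [Fintype ι] [Fintype κ] (e : ι × Fin 2 ≃ κ)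
    {A B : Matrix ι ι ℂ} {K : ℝ}
    (hA : ∀ v, sqNorm (A *ᵥ v) ≤ K * sqNorm v) (hB : ∀ v, sqNorm (B *ᵥ v) ≤ K * sqNorm v)
    {a b : Matrix (Fin 2) (Fin 2) ℂ} (ha : IsBloch a) (hb : IsBloch b) (v : κ → ℂ) :
    sqNorm (Matrix.reindex e e
      ((1/2 : ℂ) • (A ⊗ₖ (a + b)) + (1/2 : ℂ) • (B ⊗ₖ (a - b))) *ᵥ v) ≤ 2 * K * sqNorm v := by
  rw [sqNorm_reindex_mulVec, ← Matrix.kronecker_smul, ← Matrix.kronecker_smul, Matrix.add_mulVec]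
  have h1 := sqNorm_kronecker_mulVec_le hA ((1/2 : ℂ) • (a + b)) (v ∘ e)
  have h2 := sqNorm_kronecker_mulVec_le hB ((1/2 : ℂ) • (a - b)) (v ∘ e)
  have h3 : ∑ k, sqNorm (((1/2 : ℂ) • (a + b)) *ᵥ fun l => (v ∘ e) (k, l)) +
      ∑ k, sqNorm (((1/2 : ℂ) • (a - b)) *ᵥ fun l => (v ∘ e) (k, l)) = sqNorm v := by
    rw [← Finset.sum_add_distrib]
    simp only [sqNorm_half_sum_add_half_diff ha hb]
    simp only [sqNorm]
    rw [← Fintype.sum_prod_type']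
    exact Equiv.sum_comp e fun i => ‖v i‖ ^ 2
  refine (sqNorm_add_le _ _).trans ?_
  rw [← h3]
  linarith

lemma re_expectation_sq_le {ι : Type*} [Fintype ι] (A : Matrix ι ι ℂ) (ψ : ι → ℂ) :
    (star ψ ⬝ᵥ A *ᵥ ψ).re ^ 2 ≤ sqNorm ψ * sqNorm (A *ᵥ ψ) := by
  have h : |(star ψ ⬝ᵥ A *ᵥ ψ).re| ≤ ∑ i, ‖ψ i‖ * ‖(A *ᵥ ψ) i‖ := by
    refine (Complex.abs_re_le_norm _).trans ((norm_sum_le _ _).trans (le_of_eq ?_))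
    simp
  rw [← sq_abs]
  exact (pow_le_pow_left₀ (abs_nonneg _) h 2).trans (Finset.sum_mul_sq_le_sq_mul_sq _ _ _)

/-- Bound underlying the invariant `μ̃`:
`⟨ψ, Mₙ ψ⟩² + ⟨ψ, Mₙ' ψ⟩² ≤ 2 ^ n` for every unit vector `ψ`. -/
theorem mermin_squares_bound
    (a a' : ℕ → Matrix (Fin 2) (Fin 2) ℂ)
    (ha : ∀ i, 1 ≤ i → IsBloch (a i))
    (ha' : ∀ i, 1 ≤ i → IsBloch (a' i))
    (M M' : (n : ℕ) → Matrix (Fin (2 ^ n)) (Fin (2 ^ n)) ℂ)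
    (hM1 : M 1 = a 1)
    (hM'1 : M' 1 = a' 1)
    (hM : ∀ n, 1 ≤ n → M (n + 1) =
      Matrix.reindex (qubitEquiv n) (qubitEquiv n)
        ((1/2 : ℂ) • (M n ⊗ₖ (a (n+1) + a' (n+1))) +
         (1/2 : ℂ) • (M' n ⊗ₖ (a (n+1) - a' (n+1)))))
    (hM' : ∀ n, 1 ≤ n → M' (n + 1) =
      Matrix.reindex (qubitEquiv n) (qubitEquiv n)
        ((1/2 : ℂ) • (M' n ⊗ₖ (a' (n+1) + a (n+1))) +
         (1/2 : ℂ) • (M n ⊗ₖ (a' (n+1) - a (n+1)))))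
    (n : ℕ) (hn : 1 ≤ n)
    (ψ : Fin (2 ^ n) → ℂ) (hψ : ∑ i, ‖ψ i‖ ^ 2 = 1) :
    (star ψ ⬝ᵥ (M n).mulVec ψ).re ^ 2 + (star ψ ⬝ᵥ (M' n).mulVec ψ).re ^ 2 ≤ (2 : ℝ) ^ n := by
  have bound : ∀ k : ℕ, (∀ v, sqNorm (M (k + 1) *ᵥ v) ≤ 2 ^ k * sqNorm v) ∧
      ∀ v, sqNorm (M' (k + 1) *ᵥ v) ≤ 2 ^ k * sqNorm v := by
    intro k
    induction k with
    | zero =>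
      constructor
      · intro v
        have h := (ha 1 le_rfl).sqNorm_mulVec v
        rw [← hM1] at h
        simpa using h.le
      · intro v
        have h := (ha' 1 le_rfl).sqNorm_mulVec v
        rw [← hM'1] at h
        simpa using h.le
    | succ k ih =>
      have hk : 1 ≤ k + 1 := Nat.le_add_left 1 k
      have hak := ha (k + 1 + 1) (Nat.le_add_left 1 _)
      have hak' := ha' (k + 1 + 1) (Nat.le_add_left 1 _)
      rw [hM _ hk, hM' _ hk, pow_succ' (2 : ℝ) k]
      exact ⟨sqNorm_mermin_step _ ih.1 ih.2 hak hak', sqNorm_mermin_step _ ih.2 ih.1 hak' hak⟩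
  obtain ⟨k, rfl⟩ : ∃ k, n = k + 1 := ⟨n - 1, by omega⟩
  have hψ' : sqNorm ψ = 1 := hψ
  have h1 := re_expectation_sq_le (M (k + 1)) ψ
  have h2 := re_expectation_sq_le (M' (k + 1)) ψ
  have b1 := (bound k).1 ψ
  have b2 := (bound k).2 ψ
  rw [hψ'] at h1 h2 b1 b2
  rw [pow_succ (2 : ℝ) k]
  linarith
end

section
/- Consider the polynomial function f : ℂ⁴ → ℂ given by f(w, x, y, z) = 1 + z + y - yz + x + xz - xy + xyz + w - wz + wy + wyz + wx + wxz + wxy - wxyz. Then the affine hypersurface f = 0 is smooth: there is no point (w, x, y, z) ∈ ℂ⁴ at which f and all four partial derivatives ∂f/∂w, ∂f/∂x, ∂f/∂y, ∂f/∂z vanish simultaneously. -/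
/-!
Put `A = 1 - (x + z) + x z`, `B = 1 - (w + y) + w y`, `P = 2 - A`, `Q = 2 - B`. The partials of `f24`
in `w, y, x, z` are `A + y P + 2 x`, `A + w P`, `B + z Q + 2 w` and `B + x Q`. Their vanishing gives
`(1 - w) P = 2` and `(y - w) P = -2 x`, hence `y = w - x + w x`, and likewise `(1 - x) Q = 2` and
`z = x - w + w x`. Thus everything reduces to three equations in `w` and `x`: the two equations
`(1 - w) P = 2`, `(1 - x) Q = 2`, which are exchanged by `w ↔ x`, and `f24 = 0`.
The difference of the first two forces `w = x` or `w + x = w x + 2`, and with their sum this leaves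
`w = x` with `w ^ 4 = 2 w ^ 3 + 1`, or `w x = -1/2` with `w + x = 3/2`. In neither case does `f24`
vanish.
-/

/-- The hyperplane-section equation of `X ∩ H_{G₂₄}` in the chart
`w₀ = x₀ = y₀ = z₀ = 1`. -/
def f24 (w x y z : ℂ) : ℂ :=
  1 + z + y - y*z + x + x*z - x*y + x*y*z
    + w - w*z + w*y + w*y*z + w*x + w*x*z + w*x*y - w*x*y*z

lemma deriv_affine (α β c : ℂ) : deriv (fun t : ℂ => α + t * β) c = β := by
  simp

/-- If `A + P = 2`, then `A + w * P = 0` makes `P` a unit with inverse `(1 - w) / 2`, so that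
`A + y * P + 2 * x = 0` can be solved for `y`. -/
lemma solve_partials {A P w x y : ℂ} (h : A + P = 2) (h1 : A + y * P + 2 * x = 0)
    (h2 : A + w * P = 0) : y = w - x + w * x := by
  linear_combination (1 / 2) * (1 - w) * (h1 - h2) - (1 / 2) * (y - w) * (h - h2)

/-- The three equations in `w` and `x` left after eliminating `y` and `z` are inconsistent. -/
lemma reduced_inconsistent {w x : ℂ}
    (e1 : -1 + 2 * x - 2 * w - x ^ 2 + w ^ 2 - 2 * w ^ 2 * x + w ^ 2 * x ^ 2 = 0)
    (e2 : -1 + 2 * w - 2 * x - w ^ 2 + x ^ 2 - 2 * x ^ 2 * w + x ^ 2 * w ^ 2 = 0)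
    (e3 : (1 + x) * (1 + w) + (x - w + w * x) * (1 + (x - w + w * x)) = 0) : False := by
  have hsum : (w * x) ^ 2 - w * x * (w + x) - 1 = 0 := by
    linear_combination (1 / 2) * (e1 + e2)
  have hdiff : (w - x) * (w + x - w * x - 2) = 0 := by
    linear_combination (1 / 2) * (e1 - e2)
  rcases mul_eq_zero.mp hdiff with h | h
  · have e : w = x := sub_eq_zero.mp h
    subst e
    have c : w ^ 3 + w ^ 2 + w + 1 = 0 := by linear_combination (1 / 2) * (e3 - hsum)
    -- The cubic gives `w ^ 4 = 1`, whence `2 w ^ 3 = w ^ 4 - 1 = 0`.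
    have c3 : w ^ 3 = 0 := by linear_combination (1 / 2) * (w - 1) * c - (1 / 2) * hsum
    have hw : w = 0 := pow_eq_zero_iff (by norm_num) |>.mp c3
    rw [hw] at c
    norm_num at c
  · have hp : w * x = -1 / 2 := by linear_combination -(1 / 2) * hsum - (1 / 2) * (w * x) * h
    have hs : w + x = 3 / 2 := by linear_combination h + hp
    have hd : (x - w) ^ 2 = 17 / 4 := by linear_combination (w + x + 3 / 2) * hs - 4 * hp
    have : (6 : ℂ) = 0 := by
      linear_combination e3 - hs - hp - (2 * (x - w) + w * x + 1 / 2) * hp - hd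
    norm_num at this

/-- The affine hypersurface `f24 = 0` is smooth: there is no point of `ℂ⁴` at
which `f24` and all four partial derivatives vanish simultaneously. -/
theorem f24_hypersurface_smooth :
    ¬ ∃ w x y z : ℂ,
      f24 w x y z = 0 ∧
      deriv (fun t => f24 t x y z) w = 0 ∧
      deriv (fun t => f24 w t y z) x = 0 ∧
      deriv (fun t => f24 w x t z) y = 0 ∧
      deriv (fun t => f24 w x y t) z = 0 := by
  rintro ⟨w, x, y, z, h0, hw, hx, hy, hz⟩
  -- `f24` is affine in each variable, so each partial derivative is the linear coefficient.
  have ew : (fun t => f24 t x y z) = fun t => f24 0 x y z +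
      t * ((1 - (x + z) + x * z) + y * (1 + (x + z) - x * z) + 2 * x) := by
    funext t; simp only [f24]; ring
  have ey : (fun t => f24 w x t z) = fun t => f24 w x 0 z +
      t * ((1 - (x + z) + x * z) + w * (1 + (x + z) - x * z)) := by
    funext t; simp only [f24]; ring
  have ex : (fun t => f24 w t y z) = fun t => f24 w 0 y z +
      t * ((1 - (w + y) + w * y) + z * (1 + (w + y) - w * y) + 2 * w) := by
    funext t; simp only [f24]; ring
  have ez : (fun t => f24 w x y t) = fun t => f24 w x y 0 +
      t * ((1 - (w + y) + w * y) + x * (1 + (w + y) - w * y)) := by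
    funext t; simp only [f24]; ring
  rw [ew, deriv_affine] at hw
  rw [ex, deriv_affine] at hx
  rw [ey, deriv_affine] at hy
  rw [ez, deriv_affine] at hz
  have sy : y = w - x + w * x := solve_partials (by ring) hw hy
  have sz : z = x - w + x * w := solve_partials (by ring) hx hz
  subst sy sz
  simp only [f24] at h0
  refine reduced_inconsistent (w := w) (x := x) ?_ ?_ ?_
  · linear_combination -hy
  · linear_combination -hz
  · linear_combination h0 - (w - x + w * x) * hy
end

section
/- Consider the polynomial function f : ℂ⁴ → ℂ given by f(w, x, y, z) = 1 + z + y + yz + x - xz + xy + xyz + w - wz + wy - wyz + wx + wxz - wxy + wxyz. Then the points (w, x, y, z) = (1+√2, 0, -1, 1+√2) and (w, x, y, z) = (1-√2, 0, -1, 1-√2) are singular points of the hypersurface f = 0: at each of these two points, f and all four partial derivatives ∂f/∂w, ∂f/∂x, ∂f/∂y, ∂f/∂z vanish. -/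
/-!
`f7` is affine in each variable separately, so its partial derivatives are its slopes. At
`(s, 0, -1, s)` the value of `f7` and the slopes in `w`, `x` and `z` vanish for every `s`,
while the slope in `y` is `1 + 2 * s - s ^ 2`, whose roots are `1 ± √2`.
-/

/-- The hyperplane-section equation of `X ∩ H_{G₇}` in the chart
`w₀ = x₀ = y₀ = z₀ = 1`. -/
def f7 (w x y z : ℂ) : ℂ :=
  1 + z + y + y*z + x - x*z + x*y + x*y*z
    + w - w*z + w*y - w*y*z + w*x + w*x*z - w*x*y + w*x*y*z

/-- `(w, x, y, z)` is a singular point of the affine hypersurface `f7 = 0`: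
`f7` and all four first partial derivatives vanish there. -/
def IsSingularPointF7 (w x y z : ℂ) : Prop :=
  f7 w x y z = 0 ∧
  deriv (fun t => f7 t x y z) w = 0 ∧
  deriv (fun t => f7 w t y z) x = 0 ∧
  deriv (fun t => f7 w x t z) y = 0 ∧
  deriv (fun t => f7 w x y t) z = 0

theorem deriv_eq_slope {g : ℂ → ℂ} (a b t₀ : ℂ) (h : ∀ t, g t = a + b * t) :
    deriv g t₀ = b := by
  rw [funext h]
  simp

/-- Every root of `s ^ 2 = 2 * s + 1` gives a singular point `(s, 0, -1, s)`. -/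
theorem isSingularPointF7_of_sq (s : ℂ) (hs : s ^ 2 = 2 * s + 1) :
    IsSingularPointF7 s 0 (-1) s := by
  refine ⟨by unfold f7; ring, deriv_eq_slope 0 0 _ ?_, deriv_eq_slope 0 0 _ ?_,
    deriv_eq_slope 0 0 _ ?_, deriv_eq_slope 0 0 _ ?_⟩ <;> intro t <;> unfold f7
  · ring
  · ring
  · linear_combination (-1 - t) * hs
  · ring

/-- The points `(1 ± √2, 0, -1, 1 ± √2)` are singular points of the
hypersurface `f7 = 0`. -/
theorem f7_singular_points :
    IsSingularPointF7 ((1 + Real.sqrt 2 : ℝ) : ℂ) 0 (-1) ((1 + Real.sqrt 2 : ℝ) : ℂ) ∧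
    IsSingularPointF7 ((1 - Real.sqrt 2 : ℝ) : ℂ) 0 (-1) ((1 - Real.sqrt 2 : ℝ) : ℂ) := by
  have h : (Real.sqrt 2) ^ 2 = 2 := Real.sq_sqrt (by norm_num)
  have h' : ((Real.sqrt 2 : ℝ) : ℂ) ^ 2 = 2 := by exact_mod_cast h
  constructor <;> apply isSingularPointF7_of_sq <;> push_cast <;> linear_combination h'
end

section
/- Consider the polynomial function f : ℂ⁴ → ℂ given by f(w, x, y, z) = 1 + z + y + yz + x - xz + xy + xyz + w - wz + wy - wyz + wx + wxz - wxy + wxyz. At each of the two singular points (w, x, y, z) = (1+√2, 0, -1, 1+√2) and (w, x, y, z) = (1-√2, 0, -1, 1-√2) of the hypersurface f = 0, the 4×4 Hessian matrix (∂²f/∂u_i∂u_j) (with (u₁,u₂,u₃,u₄) = (w,x,y,z)) has nonzero determinant, i.e. these singularities are isolated singular points of type A₁ (Morse points). -/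
/-!
`F7` has degree one in each variable separately, so each first partial derivative is the
coefficient of the corresponding variable, and the Hessian has zero diagonal. At a point
`(s, 0, -1, s)` its entries are `f_wx = 2`, `f_wy = f_yz = 1 - s`, `f_wz = 0`, `f_xy = 1 + s²`,
`f_xz = -2`, and the determinant is `16 (1 - s)²`, which vanishes only for `s = 1`. At
`s = 1 ± √2` it equals `32`.
-/

/-- The hyperplane-section equation of `X ∩ H_{G₇}` in the chart
`w₀ = x₀ = y₀ = z₀ = 1`, as a function on `ℂ⁴ = (Fin 4 → ℂ)` with
coordinates `(u 0, u 1, u 2, u 3) = (w, x, y, z)`. -/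
def F7 (u : Fin 4 → ℂ) : ℂ :=
  1 + u 3 + u 2 + u 2 * u 3 + u 1 - u 1 * u 3 + u 1 * u 2 + u 1 * u 2 * u 3
    + u 0 - u 0 * u 3 + u 0 * u 2 - u 0 * u 2 * u 3
    + u 0 * u 1 + u 0 * u 1 * u 3 - u 0 * u 1 * u 2 + u 0 * u 1 * u 2 * u 3

/-- Partial derivative of `g : ℂ⁴ → ℂ` with respect to the `i`-th coordinate
at the point `p`. -/
noncomputable def pderiv4 (g : (Fin 4 → ℂ) → ℂ) (i : Fin 4) (p : Fin 4 → ℂ) : ℂ :=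
  deriv (fun t => g (Function.update p i t)) (p i)

/-- Hessian matrix `(∂²g/∂uᵢ∂uⱼ)` of `g : ℂ⁴ → ℂ` at a point `p`. -/
noncomputable def hessian4 (g : (Fin 4 → ℂ) → ℂ) (p : Fin 4 → ℂ) :
    Matrix (Fin 4) (Fin 4) ℂ :=
  Matrix.of fun i j => pderiv4 (pderiv4 g j) i p

/-- The partial derivative of a function affine in the `i`-th coordinate is its slope. -/
lemma pderiv4_eq_of_affine {g : (Fin 4 → ℂ) → ℂ} {i : Fin 4} {p : Fin 4 → ℂ} (a b : ℂ)
    (h : ∀ t, g (Function.update p i t) = a + b * t) : pderiv4 g i p = b := by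
  have h' : (fun t => g (Function.update p i t)) = fun t => a + b * t := funext h
  rw [pderiv4, h']
  simp

lemma pderiv4_F7_0 : pderiv4 F7 0 = fun u =>
    1 - u 3 + u 2 - u 2 * u 3 + u 1 + u 1 * u 3 - u 1 * u 2 + u 1 * u 2 * u 3 := by
  funext u
  refine pderiv4_eq_of_affine
    (1 + u 3 + u 2 + u 2 * u 3 + u 1 - u 1 * u 3 + u 1 * u 2 + u 1 * u 2 * u 3) _ fun t => ?_
  simp [F7]
  ring

lemma pderiv4_F7_1 : pderiv4 F7 1 = fun u =>
    1 - u 3 + u 2 + u 2 * u 3 + u 0 + u 0 * u 3 - u 0 * u 2 + u 0 * u 2 * u 3 := by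
  funext u
  refine pderiv4_eq_of_affine
    (1 + u 3 + u 2 + u 2 * u 3 + u 0 - u 0 * u 3 + u 0 * u 2 - u 0 * u 2 * u 3) _ fun t => ?_
  simp [F7]
  ring

lemma pderiv4_F7_2 : pderiv4 F7 2 = fun u =>
    1 + u 3 + u 1 + u 1 * u 3 + u 0 - u 0 * u 3 - u 0 * u 1 + u 0 * u 1 * u 3 := by
  funext u
  refine pderiv4_eq_of_affine
    (1 + u 3 + u 1 - u 1 * u 3 + u 0 - u 0 * u 3 + u 0 * u 1 + u 0 * u 1 * u 3) _ fun t => ?_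
  simp [F7]
  ring

lemma pderiv4_F7_3 : pderiv4 F7 3 = fun u =>
    1 + u 2 - u 1 + u 1 * u 2 - u 0 - u 0 * u 2 + u 0 * u 1 + u 0 * u 1 * u 2 := by
  funext u
  refine pderiv4_eq_of_affine
    (1 + u 2 + u 1 + u 1 * u 2 + u 0 + u 0 * u 2 + u 0 * u 1 - u 0 * u 1 * u 2) _ fun t => ?_
  simp [F7]
  ring

/-- A function affine in the `i`-th coordinate has constant term its value at coordinate `0`, so
its slope can be certified without spelling out that term. -/
lemma pderiv4_eq_of_sub {g : (Fin 4 → ℂ) → ℂ} {i : Fin 4} {p : Fin 4 → ℂ} (b : ℂ)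
    (h : ∀ t, g (Function.update p i t) - g (Function.update p i 0) = b * t) :
    pderiv4 g i p = b :=
  pderiv4_eq_of_affine (g (Function.update p i 0)) b fun t => by rw [← h t]; ring

lemma hessian4_F7 (s : ℂ) : hessian4 F7 ![s, 0, -1, s] =
    !![0, 2, 1 - s, 0;
       2, 0, 1 + s ^ 2, -2;
       1 - s, 1 + s ^ 2, 0, 1 - s;
       0, -2, 1 - s, 0] := by
  ext i j
  fin_cases i <;> fin_cases j <;>
    simp only [hessian4, Matrix.of_apply, Fin.zero_eta, Fin.mk_one, Fin.reduceFinMk,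
      pderiv4_F7_0, pderiv4_F7_1, pderiv4_F7_2, pderiv4_F7_3] <;>
    refine pderiv4_eq_of_sub _ fun t => ?_ <;>
    simp <;>
    ring

lemma det_hessian4_F7 (s : ℂ) : (hessian4 F7 ![s, 0, -1, s]).det = 16 * (1 - s) ^ 2 := by
  rw [hessian4_F7]
  simp [Matrix.det_succ_row_zero, Fin.sum_univ_succ, Fin.succAbove]
  ring

/-- At each of the two singular points `(1 ± √2, 0, -1, 1 ± √2)` of the
hypersurface `F7 = 0`, the Hessian matrix of `F7` has nonzero determinant,
i.e. these are `A₁` (Morse) singularities. -/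
theorem f7_singularities_are_A1 :
    (hessian4 F7
      ![((1 + Real.sqrt 2 : ℝ) : ℂ), 0, -1, ((1 + Real.sqrt 2 : ℝ) : ℂ)]).det ≠ 0 ∧
    (hessian4 F7
      ![((1 - Real.sqrt 2 : ℝ) : ℂ), 0, -1, ((1 - Real.sqrt 2 : ℝ) : ℂ)]).det ≠ 0 := by
  constructor <;> rw [det_hessian4_F7] <;> simp
end

section
/- Let n ≥ 5 and set m = n - 3 (so m ≥ 2). Consider the polynomial function f : ℂ³ × ℂ^m → ℂ given by f(u₁, u₂, u₃, v₁, ..., v_m) = u₁u₂u₃ + v₁v₂⋯v_m. Then the singular locus of the hypersurface f = 0, i.e. the set of points of ℂ^{3+m} at which f and all of its first partial derivatives vanish, is an infinite set. In particular the hypersurface has non-isolated singularities. -/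
/-- For `n ≥ 5` and `m = n - 3`, the singular locus of the affine
hypersurface `u₁u₂u₃ + v₁v₂⋯v_m = 0` in `ℂ³ × ℂ^m` (the chart of the
hyperplane section of the Segre variety determined by `|GHZ_n⟩`) is infinite:
the singularities are non-isolated. -/
theorem ghz_section_nonisolated_singularities (n : ℕ) (hn : 5 ≤ n) :
    Set.Infinite
      {p : (Fin 3 → ℂ) × (Fin (n - 3) → ℂ) |
        (p.1 0 * p.1 1 * p.1 2 + ∏ j, p.2 j = 0) ∧
        (∀ i : Fin 3,
          deriv (fun t => (Function.update p.1 i t) 0 * (Function.update p.1 i t) 1 *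
            (Function.update p.1 i t) 2 + ∏ j, p.2 j) (p.1 i) = 0) ∧
        (∀ j : Fin (n - 3),
          deriv (fun t => p.1 0 * p.1 1 * p.1 2 +
            ∏ k, (Function.update p.2 j t) k) (p.2 j) = 0)} := by
  -- The line `c ↦ ((c, 0, 0), 0)` lies in the singular locus: along it, freeing any single
  -- coordinate leaves a zero factor in each of the two monomials, the second because `n - 3 ≥ 2`.
  refine Set.infinite_of_injective_forall_mem
    (f := fun c : ℂ => ((![c, 0, 0] : Fin 3 → ℂ), (0 : Fin (n - 3) → ℂ))) ?_ ?_
  · intro a b h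
    simpa using congrFun (congrArg Prod.fst h) 0
  · intro c
    have hprod : ∏ j : Fin (n - 3), (0 : Fin (n - 3) → ℂ) j = 0 :=
      Finset.prod_eq_zero (Finset.mem_univ ⟨0, by omega⟩) rfl
    refine ⟨by dsimp only; rw [hprod]; simp, fun i => ?_, fun j => ?_⟩
    · fin_cases i <;> simp [Function.update]
    · have : Nontrivial (Fin (n - 3)) := Fin.nontrivial_iff_two_le.mpr (by omega)
      obtain ⟨k, hk⟩ := exists_ne j
      have hupd : ∀ t : ℂ, ∏ l, Function.update (0 : Fin (n - 3) → ℂ) j t l = 0 := fun t =>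
        Finset.prod_eq_zero (Finset.mem_univ k) (by simp [hk])
      simp only [hupd]
      simp
end

section
/- For every n ≥ 2, the n-uniform n-qubit hypergraph state (the hypergraph state whose single hyperedge is {1,...,n}) is SLOCC-equivalent to |GHZ_n⟩. Concretely: let G_n ∈ ℂ^{({0,1}^n)} be the vector with G_n(x) = -1/√(2^n) if x = (1,...,1) and G_n(x) = 1/√(2^n) otherwise, and let GHZ_n ∈ ℂ^{({0,1}^n)} be the vector with GHZ_n(x) = 1/√2 if x = (0,...,0) or x = (1,...,1), and 0 otherwise. Then there exist invertible 2×2 complex matrices A₁, ..., A_n and a nonzero scalar c ∈ ℂ such that for all x ∈ {0,1}^n, Σ_{y ∈ {0,1}^n} (Π_{i=1}^n A_i(x_i, y_i)) · G_n(y) = c · GHZ_n(x). -/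
/-!
Up to normalisation, the hypergraph state is a sum of two product vectors,
`(e₀ + e₁)^{⊗n} - 2 • e₁^{⊗n}`. Choosing `b` with `b ^ n = -1/2`, the invertible matrix
`!![1, 0; -b, b]` sends `e₀ + e₁` to `e₀` and `e₁` to `b • e₁`, so its `n`-th tensor power sends
this sum to `e₀^{⊗n} - 2 b ^ n • e₁^{⊗n} = e₀^{⊗n} + e₁^{⊗n}`.
-/

/-- The `n`-uniform `n`-qubit hypergraph state `C_{{1,…,n}}Z |+⟩^{⊗n}`:
amplitude `-1/√(2^n)` on `|1…1⟩` and `+1/√(2^n)` on every other basis state. -/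
noncomputable def nUniformHypergraphState (n : ℕ) : (Fin n → Fin 2) → ℂ := fun x =>
  if ∀ i, x i = 1 then -(1 / (Real.sqrt (2 ^ n) : ℂ)) else 1 / (Real.sqrt (2 ^ n) : ℂ)

/-- The `n`-qubit GHZ state. -/
noncomputable def GHZstate (n : ℕ) : (Fin n → Fin 2) → ℂ := fun x =>
  if (∀ i, x i = 0) ∨ (∀ i, x i = 1) then ((1 / Real.sqrt 2 : ℝ) : ℂ) else 0

/-- The hypergraph state as a combination of `(e₀ + e₁)^{⊗n}` and `e₁^{⊗n}`. -/
lemma nUniformHypergraphState_eq (n : ℕ) (y : Fin n → Fin 2) :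
    nUniformHypergraphState n y =
      1 / (Real.sqrt (2 ^ n) : ℂ) +
        if y = (fun _ => 1) then -2 * (1 / (Real.sqrt (2 ^ n) : ℂ)) else 0 := by
  unfold nUniformHypergraphState
  simp only [funext_iff]
  split_ifs <;> ring

/-- A tensor product of local operators acts on a sum of two product vectors factor by factor. -/
lemma sum_prod_mul_nUniformHypergraphState (n : ℕ) (A : Matrix (Fin 2) (Fin 2) ℂ)
    (x : Fin n → Fin 2) :
    ∑ y : Fin n → Fin 2, (∏ i, A (x i) (y i)) * nUniformHypergraphState n y =
      1 / (Real.sqrt (2 ^ n) : ℂ) *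
        (∏ i, (A (x i) 0 + A (x i) 1) - 2 * ∏ i, A (x i) 1) := by
  have h : ∏ i, (A (x i) 0 + A (x i) 1) = ∑ y : Fin n → Fin 2, ∏ i, A (x i) (y i) := by
    rw [← Fintype.piFinset_univ, ← Finset.prod_univ_sum]
    simp only [Fin.sum_univ_two]
  simp only [nUniformHypergraphState_eq, mul_add, Finset.sum_add_distrib, mul_ite, mul_zero,
    Finset.sum_ite_eq', Finset.mem_univ, if_true, ← Finset.sum_mul, h]
  ring

/-- For every `n ≥ 2`, the `n`-uniform `n`-qubit hypergraph state is
SLOCC-equivalent to `|GHZ_n⟩`: some tensor product of invertible local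
operators maps it to a nonzero multiple of `|GHZ_n⟩`. -/
theorem nUniform_slocc_equiv_GHZ (n : ℕ) (hn : 2 ≤ n) :
    ∃ (A : Fin n → Matrix (Fin 2) (Fin 2) ℂ) (c : ℂ),
      (∀ i, IsUnit (A i)) ∧ c ≠ 0 ∧
      ∀ x : Fin n → Fin 2,
        ∑ y : Fin n → Fin 2, (∏ i, A i (x i) (y i)) * nUniformHypergraphState n y =
          c * GHZstate n x := by
  obtain ⟨b, hb⟩ := IsAlgClosed.exists_pow_nat_eq (-1 / 2 : ℂ) (show 0 < n by omega)
  have hb0 : b ≠ 0 := by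
    rintro rfl
    rw [zero_pow (by omega)] at hb
    norm_num at hb
  have hs : (Real.sqrt 2 : ℂ) ≠ 0 := by
    exact_mod_cast (Real.sqrt_pos.2 (by norm_num : (0 : ℝ) < 2)).ne'
  have hk : (Real.sqrt (2 ^ n) : ℂ) ≠ 0 := by
    exact_mod_cast (Real.sqrt_pos.2 (by positivity : (0 : ℝ) < 2 ^ n)).ne'
  refine ⟨fun _ => !![1, 0; -b, b], Real.sqrt 2 * (1 / (Real.sqrt (2 ^ n) : ℂ)), fun _ => ?_,
    mul_ne_zero hs (one_div_ne_zero hk), fun x => ?_⟩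
  · rw [Matrix.isUnit_iff_isUnit_det]
    simpa [Matrix.det_fin_two] using hb0
  rw [sum_prod_mul_nUniformHypergraphState]
  unfold GHZstate
  by_cases h0 : ∀ i, x i = 0
  · have hz : (0 : ℂ) ^ n = 0 := zero_pow (by omega)
    simp [h0, hz]
    field_simp
  by_cases h1 : ∀ i, x i = 1
  · have hz : (0 : ℂ) ^ n = 0 := zero_pow (by omega)
    simp [h1, hz, hb]
    field_simp
  rw [if_neg (by tauto)]
  push Not at h0 h1
  obtain ⟨i, hi⟩ := h0
  obtain ⟨j, hj⟩ := h1
  -- A coordinate equal to `1` kills the `e₀` term, and one equal to `0` kills the `e₁` term.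
  have hi' : x i = 1 := by omega
  have hj' : x j = 0 := by omega
  rw [Finset.prod_eq_zero (Finset.mem_univ i) (by simp [hi']),
    Finset.prod_eq_zero (Finset.mem_univ j) (by simp [hj'])]
  simp
end

section
/- The three-qubit hypergraph state |G⟩ = CCZ |+⟩^{⊗3} ∈ ℂ⁸, i.e. the vector with amplitude -1/√8 on |111⟩ and +1/√8 on every other computational basis state, violates Mermin's inequality: there exist Bloch observables a₁ = α₁X+β₁Y+γ₁Z, a₁', a₂, a₂', a₃, a₃' (each of the form αX+βY+γZ with real α²+β²+γ²=1) such that ⟨G| M₃ |G⟩ > 1, where M₃ = (1/2)(a₁⊗a₂⊗a₃' + a₁⊗a₂'⊗a₃ + a₁'⊗a₂⊗a₃ - a₁'⊗a₂'⊗a₃'). -/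
/-!
Every qubit is given the same pair of observables `a = (4/5) X - (3/5) Z` and `a' = Z`.
The nonzero correlators of the state in `X` and `Z` are `⟨XXX⟩ = ⟨XXZ⟩ = 1/2` and
`⟨XZZ⟩ = -1/2`, with their permutations, while `⟨ZZZ⟩ = 0`. Since the state is symmetric,
`⟨M₃⟩ = (3/2) ⟨a a a'⟩`, where
`⟨a a a'⟩ = (4/5)² ⟨XXZ⟩ - 2 (4/5) (3/5) ⟨XZZ⟩ = 4/5`.
Hence `⟨M₃⟩ = 6/5 > 1`.
-/

open Matrix Kronecker

/-- The three-qubit hypergraph state `CCZ |+⟩^{⊗3}`: amplitude `-1/√8` on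
`|111⟩` and `+1/√8` on every other computational basis state. -/
noncomputable def cczPlusState : Fin 2 × Fin 2 × Fin 2 → ℂ := fun x =>
  if x.1 = 1 ∧ x.2.1 = 1 ∧ x.2.2 = 1 then -(1 / (Real.sqrt 8 : ℂ))
  else 1 / (Real.sqrt 8 : ℂ)

/-- The three-qubit hypergraph state `CCZ |+⟩^{⊗3}` violates Mermin's
inequality: for some Bloch observables the expectation of the Mermin operator
`M₃ = (1/2)(a₁a₂a₃' + a₁a₂'a₃ + a₁'a₂a₃ - a₁'a₂'a₃')` exceeds `1`. -/
theorem ccz_state_violates_mermin :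
    ∃ a₁ a₁' a₂ a₂' a₃ a₃' : Matrix (Fin 2) (Fin 2) ℂ,
      IsBloch a₁ ∧ IsBloch a₁' ∧ IsBloch a₂ ∧ IsBloch a₂' ∧ IsBloch a₃ ∧ IsBloch a₃' ∧
      1 < (star cczPlusState ⬝ᵥ
        (((1/2 : ℂ) • (a₁ ⊗ₖ (a₂ ⊗ₖ a₃') + a₁ ⊗ₖ (a₂' ⊗ₖ a₃) + a₁' ⊗ₖ (a₂ ⊗ₖ a₃)
            - a₁' ⊗ₖ (a₂' ⊗ₖ a₃'))).mulVec cczPlusState)).re := by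
  have ha : IsBloch !![(-3/5 : ℂ), 4/5; 4/5, 3/5] := by
    refine ⟨4/5, 0, -3/5, by norm_num, ?_⟩
    ext i j
    fin_cases i <;> fin_cases j <;> simp [PauliX, PauliY, PauliZ]
    norm_num
  have ha' : IsBloch !![(1 : ℂ), 0; 0, -1] := by
    refine ⟨0, 0, 1, by norm_num, ?_⟩
    simp [PauliZ]
  refine ⟨_, _, _, _, _, _, ha, ha', ha, ha', ha, ha', ?_⟩
  have hc : ((Real.sqrt 8 : ℂ))⁻¹ ^ 2 = 1 / 8 := by
    rw [inv_pow, ← Complex.ofReal_pow, Real.sq_sqrt (by norm_num)]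
    norm_num
  suffices h : star cczPlusState ⬝ᵥ
      (((1/2 : ℂ) • (!![(-3/5 : ℂ), 4/5; 4/5, 3/5] ⊗ₖ
            (!![(-3/5 : ℂ), 4/5; 4/5, 3/5] ⊗ₖ !![(1 : ℂ), 0; 0, -1])
          + !![(-3/5 : ℂ), 4/5; 4/5, 3/5] ⊗ₖ
            (!![(1 : ℂ), 0; 0, -1] ⊗ₖ !![(-3/5 : ℂ), 4/5; 4/5, 3/5])
          + !![(1 : ℂ), 0; 0, -1] ⊗ₖ
            (!![(-3/5 : ℂ), 4/5; 4/5, 3/5] ⊗ₖ !![(-3/5 : ℂ), 4/5; 4/5, 3/5])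
          - !![(1 : ℂ), 0; 0, -1] ⊗ₖ
            (!![(1 : ℂ), 0; 0, -1] ⊗ₖ !![(1 : ℂ), 0; 0, -1]))).mulVec cczPlusState)
      = ((6/5 : ℝ) : ℂ) by
    rw [h, Complex.ofReal_re]
    norm_num
  simp [dotProduct, mulVec, Fintype.sum_prod_type, Fin.sum_univ_two, cczPlusState,
    kroneckerMap_apply]
  linear_combination (48/5) * hc
end

section
/- The four-qubit hypergraph state |G₁₇⟩ = CCCZ |+⟩^{⊗4} ∈ ℂ^{16}, i.e. the vector with amplitude -1/4 on |1111⟩ and +1/4 on every other computational basis state, violates Mermin's inequality: there exist Bloch observables a₁, a₁', a₂, a₂', a₃, a₃', a₄, a₄' (each of the form αX+βY+γZ with real α²+β²+γ²=1) such that ⟨G₁₇| M₄ |G₁₇⟩ > 1, where M₄ is the four-qubit Mermin operator built from these observables. -/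
/-!
Write `|G₁₇⟩ = |+⟩^{⊗4} - (1/2) |1111⟩`, a combination of two product vectors. Hence the expectation
of a product operator `A ⊗ B ⊗ C ⊗ D` is a combination of four products of one-qubit quantities:
the sum of all entries of each factor, the sums of its last row and of its last column, and its
last diagonal entry (`expect_kronecker`). The operator `M₄` is a combination of product
operators, so its expectation is explicit arithmetic once the observables are fixed. The same pair
`a = (2/3) X + (1/3) Y - (2/3) Z`, `a' = Y` on each of the four qubits gives the value
`137/108 > 1`.
-/


open Matrix Kronecker

/-- The two-qubit Mermin operator `M₂`. -/
noncomputable def mermin2 (a₁ a₁' a₂ a₂' : Matrix (Fin 2) (Fin 2) ℂ) :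
    Matrix (Fin 2 × Fin 2) (Fin 2 × Fin 2) ℂ :=
  (1/2 : ℂ) • (a₁ ⊗ₖ (a₂ + a₂') + a₁' ⊗ₖ (a₂ - a₂'))

/-- The three-qubit Mermin operator `M₃`. -/
noncomputable def mermin3 (a₁ a₁' a₂ a₂' a₃ a₃' : Matrix (Fin 2) (Fin 2) ℂ) :
    Matrix ((Fin 2 × Fin 2) × Fin 2) ((Fin 2 × Fin 2) × Fin 2) ℂ :=
  (1/2 : ℂ) • (mermin2 a₁ a₁' a₂ a₂' ⊗ₖ (a₃ + a₃') + mermin2 a₁' a₁ a₂' a₂ ⊗ₖ (a₃ - a₃'))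

/-- The four-qubit Mermin operator `M₄`. -/
noncomputable def mermin4 (a₁ a₁' a₂ a₂' a₃ a₃' a₄ a₄' : Matrix (Fin 2) (Fin 2) ℂ) :
    Matrix (((Fin 2 × Fin 2) × Fin 2) × Fin 2) (((Fin 2 × Fin 2) × Fin 2) × Fin 2) ℂ :=
  (1/2 : ℂ) • (mermin3 a₁ a₁' a₂ a₂' a₃ a₃' ⊗ₖ (a₄ + a₄') +
    mermin3 a₁' a₁ a₂' a₂ a₃' a₃ ⊗ₖ (a₄ - a₄'))

/-- The four-qubit hypergraph state `|G₁₇⟩ = CCCZ |+⟩^{⊗4}`: amplitude `-1/4`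
on `|1111⟩` and `+1/4` on every other computational basis state. -/
noncomputable def G17 : ((Fin 2 × Fin 2) × Fin 2) × Fin 2 → ℂ := fun x =>
  if x.1.1.1 = 1 ∧ x.1.1.2 = 1 ∧ x.1.2 = 1 ∧ x.2 = 1 then -(1/4) else 1/4

/-- The expectation value `⟨G₁₇| M |G₁₇⟩`. -/
noncomputable def expect
    (M : Matrix (((Fin 2 × Fin 2) × Fin 2) × Fin 2) (((Fin 2 × Fin 2) × Fin 2) × Fin 2) ℂ) : ℂ :=
  star G17 ⬝ᵥ M.mulVec G17

lemma expect_add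
    (M N : Matrix (((Fin 2 × Fin 2) × Fin 2) × Fin 2) (((Fin 2 × Fin 2) × Fin 2) × Fin 2) ℂ) :
    expect (M + N) = expect M + expect N := by
  simp only [expect, add_mulVec, dotProduct_add]

lemma expect_smul (c : ℂ)
    (M : Matrix (((Fin 2 × Fin 2) × Fin 2) × Fin 2) (((Fin 2 × Fin 2) × Fin 2) × Fin 2) ℂ) :
    expect (c • M) = c * expect M := by
  simp only [expect, smul_mulVec, dotProduct_smul, smul_eq_mul]

/-- Expectation of a product operator: the four products are the matrix elements of
`A ⊗ B ⊗ C ⊗ D` between the two product vectors whose difference is `|G₁₇⟩`. -/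
lemma expect_kronecker (A B C D : Matrix (Fin 2) (Fin 2) ℂ) :
    expect (A ⊗ₖ B ⊗ₖ C ⊗ₖ D) =
      (1 / 16) * ((A 0 0 + A 0 1 + A 1 0 + A 1 1) * (B 0 0 + B 0 1 + B 1 0 + B 1 1) *
          (C 0 0 + C 0 1 + C 1 0 + C 1 1) * (D 0 0 + D 0 1 + D 1 0 + D 1 1)
        - 2 * ((A 0 1 + A 1 1) * (B 0 1 + B 1 1) * (C 0 1 + C 1 1) * (D 0 1 + D 1 1))
        - 2 * ((A 1 0 + A 1 1) * (B 1 0 + B 1 1) * (C 1 0 + C 1 1) * (D 1 0 + D 1 1))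
        + 4 * (A 1 1 * B 1 1 * C 1 1 * D 1 1)) := by
  simp only [expect, dotProduct, mulVec, Fintype.sum_prod_type, Fin.sum_univ_two, kroneckerMap_apply,
    Pi.star_apply, G17, zero_ne_one, false_and, and_false, and_self, if_true, if_false, star_neg,
    star_div₀, star_one, star_ofNat]
  ring

/-- The four-qubit hypergraph state `|G₁₇⟩ = CCCZ |+⟩^{⊗4}` violates Mermin's
inequality: for some Bloch observables, `⟨G₁₇| M₄ |G₁₇⟩ > 1`. -/
theorem cccz_state_violates_mermin :
    ∃ a₁ a₁' a₂ a₂' a₃ a₃' a₄ a₄' : Matrix (Fin 2) (Fin 2) ℂ,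
      IsBloch a₁ ∧ IsBloch a₁' ∧ IsBloch a₂ ∧ IsBloch a₂' ∧
      IsBloch a₃ ∧ IsBloch a₃' ∧ IsBloch a₄ ∧ IsBloch a₄' ∧
      1 < (star G17 ⬝ᵥ (mermin4 a₁ a₁' a₂ a₂' a₃ a₃' a₄ a₄').mulVec G17).re := by
  set a : Matrix (Fin 2) (Fin 2) ℂ := !![-2 / 3, 2 / 3 - Complex.I / 3; 2 / 3 + Complex.I / 3, 2 / 3] with ha_def
  set a' : Matrix (Fin 2) (Fin 2) ℂ := !![0, -Complex.I; Complex.I, 0] with ha'_def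
  have ha : IsBloch a := by
    refine ⟨2 / 3, 1 / 3, -2 / 3, by norm_num, ?_⟩
    ext i j
    fin_cases i <;> fin_cases j <;> simp [a, PauliX, PauliY, PauliZ] <;> ring
  have ha' : IsBloch a' := by
    refine ⟨0, 1, 0, by norm_num, ?_⟩
    ext i j
    fin_cases i <;> fin_cases j <;> norm_num [a', PauliX, PauliY, PauliZ]
  refine ⟨a, a', a, a', a, a', a, a', ha, ha', ha, ha', ha, ha', ha, ha', ?_⟩
  change 1 < (expect _).re
  simp only [mermin4, mermin3, mermin2, add_kronecker, smul_kronecker, smul_add, expect_add,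
    expect_smul, expect_kronecker]
  simp only [ha_def, ha'_def, Matrix.add_apply, Matrix.sub_apply, Matrix.of_apply, Matrix.cons_val]
  ring_nf
  norm_num [pow_succ, Complex.I_mul_I]
end

section
/- Let |S₄⟩ ∈ ℂ^{16} be the four-qubit star graph state, the vector with amplitudes S₄(x₁,x₂,x₃,x₄) = (-1)^{x₁x₂ + x₁x₃ + x₁x₄}/4 on the computational basis. Then there exist Bloch observables a₁, a₁', a₂, a₂', a₃, a₃', a₄, a₄' (each of the form αX+βY+γZ with real α²+β²+γ²=1) such that ⟨S₄| M₄ |S₄⟩ = 2√2 = 2^{3/2}, where M₄ is the four-qubit Mermin operator built from these observables; i.e. |S₄⟩ attains the maximal quantum value 2^{(4-1)/2} of Mermin's polynomial M₄. -/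
/-!
In the basis `|±⟩` of the last three qubits the star state is `(|0+++⟩ + |1---⟩)/√2`, a GHZ state,
in which `Z` and `-Y` on the last three qubits and `X` and `Y` on the first play the roles of the
GHZ operators `X` and `Y`. For GHZ observables `cos θⱼ X + sin θⱼ Y` the expectation of the product
is `cos (θ₁ + θ₂ + θ₃ + θ₄)`. If each `aⱼ'` has angle `θⱼ + π/2`, every step of Mermin's recursion
multiplies by `√2` and shifts the total angle by `π/4`, so that
`⟨M₄⟩ = 2 √2 cos (θ₁ + θ₂ + θ₃ + θ₄ + 3π/4)`. The witnesses below have `θ₁ = -3π/4` and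
`θ₂ = θ₃ = θ₄ = 0`, which makes the cosine `1`. The expectation of
a product observable factorises over the last three qubits (`expectation_kronecker`), and `M₄` is
evaluated by expanding it into product observables.
-/

open Matrix Kronecker

/-- The four-qubit star graph state `|S₄⟩`, with amplitude
`(-1)^{x₁x₂ + x₁x₃ + x₁x₄}/4` on the basis state `(x₁, x₂, x₃, x₄)`. -/
noncomputable def starState : ((Fin 2 × Fin 2) × Fin 2) × Fin 2 → ℂ := fun x =>
  ((-1 : ℂ) ^ ((x.1.1.1 : ℕ) * (x.1.1.2 : ℕ) + (x.1.1.1 : ℕ) * (x.1.2 : ℕ) +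
      (x.1.1.1 : ℕ) * (x.2 : ℕ))) / 4

/-- The matrix element `∑ k l, (-1)^(i k) B k l (-1)^(j l)` of `B` between the states `|0⟩ ± |1⟩`,
with sign `+` for index `0` and `-` for index `1`; the states are left unnormalised. -/
noncomputable def signElement (B : Matrix (Fin 2) (Fin 2) ℂ) (i j : Fin 2) : ℂ :=
  ∑ k : Fin 2, ∑ l : Fin 2,
    (-1 : ℂ) ^ ((i : ℕ) * (k : ℕ)) * B k l * (-1 : ℂ) ^ ((j : ℕ) * (l : ℕ))

/-- Conditioned on the row and column index of the central qubit, the expectation of a product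
observable in the star state factorises over the three leaves. -/
lemma expectation_kronecker (A B C D : Matrix (Fin 2) (Fin 2) ℂ) :
    star starState ⬝ᵥ (A ⊗ₖ B ⊗ₖ C ⊗ₖ D).mulVec starState =
      (1 / 16) * ∑ i : Fin 2, ∑ j : Fin 2,
        A i j * signElement B i j * signElement C i j * signElement D i j := by
  have hS : ∀ x, star starState x = starState x := by
    intro x
    simp [starState]
  simp only [dotProduct, mulVec, hS, Fintype.sum_prod_type, Fin.sum_univ_two, signElement,
    kroneckerMap_apply, starState, Fin.val_zero, Fin.val_one, mul_zero, mul_one,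
    add_zero, zero_add, pow_zero, pow_one, one_mul]
  ring

/-- The star graph state `|S₄⟩` attains the maximal quantum value
`2^{3/2} = 2√2` of Mermin's polynomial `M₄` for a suitable choice of Bloch
observables. -/
theorem star_state_attains_max_mermin :
    ∃ a₁ a₁' a₂ a₂' a₃ a₃' a₄ a₄' : Matrix (Fin 2) (Fin 2) ℂ,
      IsBloch a₁ ∧ IsBloch a₁' ∧ IsBloch a₂ ∧ IsBloch a₂' ∧
      IsBloch a₃ ∧ IsBloch a₃' ∧ IsBloch a₄ ∧ IsBloch a₄' ∧
      star starState ⬝ᵥ (mermin4 a₁ a₁' a₂ a₂' a₃ a₃' a₄ a₄').mulVec starState =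
        ((2 * Real.sqrt 2 : ℝ) : ℂ) := by
  have hr : (√2 / 2) ^ 2 = (1 / 2 : ℝ) := by
    rw [div_pow, Real.sq_sqrt (by norm_num)]; norm_num
  refine ⟨((-(√2 / 2) : ℝ) : ℂ) • PauliX + ((-(√2 / 2) : ℝ) : ℂ) • PauliY,
    ((√2 / 2 : ℝ) : ℂ) • PauliX + ((-(√2 / 2) : ℝ) : ℂ) • PauliY,
    PauliZ, -PauliY, PauliZ, -PauliY, PauliZ, -PauliY,
    ⟨-(√2 / 2), -(√2 / 2), 0, by linarith, by simp⟩,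
    ⟨√2 / 2, -(√2 / 2), 0, by linarith, by simp⟩,
    ⟨0, 0, 1, by norm_num, by simp⟩, ⟨0, -1, 0, by norm_num, by simp⟩,
    ⟨0, 0, 1, by norm_num, by simp⟩, ⟨0, -1, 0, by norm_num, by simp⟩,
    ⟨0, 0, 1, by norm_num, by simp⟩, ⟨0, -1, 0, by norm_num, by simp⟩, ?_⟩
  simp only [mermin4, mermin3, mermin2, smul_kronecker, add_kronecker,
    add_mulVec, smul_mulVec, dotProduct_add, dotProduct_smul, expectation_kronecker]
  simp only [signElement, Fin.sum_univ_two, PauliX, PauliY, PauliZ]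
  simp
  ring_nf
  simp only [Complex.I_sq, Complex.I_pow_four]
  ring_nf
end

section
/- For every n ≥ 2, let |G₂⁽ⁿ⁾⟩ ∈ ℂ^{({0,1}^n)} be the 2-uniform n-qubit hypergraph state (complete graph state), with amplitudes G₂⁽ⁿ⁾(x) = (-1)^{Σ_{1 ≤ i < j ≤ n} x_i x_j}/√(2^n). Then there exist Bloch observables a₁, a₁', ..., a_n, a_n' (each of the form αX+βY+γZ with real α²+β²+γ²=1) such that ⟨G₂⁽ⁿ⁾| M_n |G₂⁽ⁿ⁾⟩ = 2^{(n-1)/2}, where M_n is the n-qubit Mermin operator built from these observables; i.e. the 2-uniform hypergraph states attain the maximal quantum violation of Mermin's inequalities. -/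
/-!
The observables are `a₁ = X`, `a₁' = Z` and `aᵢ = (Z + X)/√2`, `aᵢ' = (Z - X)/√2` for `i ≥ 2`,
independently of `n`. Then `(aᵢ + aᵢ')/2 = Z/√2` and `(aᵢ - aᵢ')/2 = X/√2`, so that
`M_{k+1} = (M_k ⊗ Z + M'_k ⊗ X)/√2` and `M'_{k+1} = (M'_k ⊗ Z - M_k ⊗ X)/√2`.

Let `ψ_k` be the unnormalised state, `ψ_k(x) = (-1)^{∑_{i<j} x_i x_j}`, and let
`φ_k = Z^{⊗k} ψ_k`, that is `φ_k(x) = (-1)^{|x|} ψ_k(x)`. Appending a qubit gives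
`ψ_{k+1} = ψ_k ⊗ e₀ + φ_k ⊗ e₁` and `φ_{k+1} = φ_k ⊗ e₀ - ψ_k ⊗ e₁` (`graphSign_succ`,
`twistSign_succ`). By induction on `k`, with `r = √2^{k-1}`,
`M_k ψ_k = r ψ_k`, `M_k φ_k = -r φ_k`, `M'_k ψ_k = r φ_k`, `M'_k φ_k = r ψ_k`
(`mermin_action_step` is the inductive step). In particular the graph state, which has norm one,
is an eigenvector of `M_n` with eigenvalue `√2^{n-1}`.
-/

open Matrix Kronecker Finset

/-- The 2-uniform `n`-qubit hypergraph state (complete graph state): the basis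
index `i : Fin (2^n)` encodes the bit string `x` via its binary digits, and
the amplitude is `(-1)^{∑_{j<k} x_j x_k} / √(2^n)`. -/
noncomputable def completeGraphState (n : ℕ) : Fin (2 ^ n) → ℂ := fun i =>
  ((-1 : ℂ) ^ (∑ p ∈ Finset.univ.filter (fun p : Fin n × Fin n => p.1 < p.2),
      (if (i : ℕ).testBit p.1 then 1 else 0) * (if (i : ℕ).testBit p.2 then 1 else 0))) /
    (Real.sqrt (2 ^ n) : ℂ)

/-- The `j`-th binary digit of `i`. -/
def bitVal (i j : ℕ) : ℕ := if i.testBit j then 1 else 0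

/-- The number of pairs of ones among the lowest `k` binary digits of `i`. -/
def pairCount (k i : ℕ) : ℕ :=
  ∑ p ∈ Finset.univ.filter (fun p : Fin k × Fin k => p.1 < p.2), bitVal i p.1 * bitVal i p.2

/-- The number of ones among the lowest `k` binary digits of `i`. -/
def bitWeight (k i : ℕ) : ℕ := ∑ j : Fin k, bitVal i j

/-- The unnormalised complete graph state `ψ_k`. -/
def graphSign (k : ℕ) (i : Fin (2 ^ k)) : ℂ := (-1) ^ pairCount k i

/-- The vector `φ_k = Z^{⊗k} ψ_k`. -/
def twistSign (k : ℕ) (i : Fin (2 ^ k)) : ℂ := (-1) ^ (pairCount k i + bitWeight k i)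

lemma bitVal_zero (i : ℕ) (b : Fin 2) : bitVal (b + 2 * i) 0 = b := by
  fin_cases b <;> simp [bitVal, Nat.testBit_zero]

lemma bitVal_succ (i j : ℕ) (b : Fin 2) : bitVal (b + 2 * i) (j + 1) = bitVal i j := by
  have h : ((b : ℕ) + 2 * i) / 2 = i := by omega
  simp only [bitVal, Nat.testBit_succ, h]

lemma bitWeight_succ (k i : ℕ) (b : Fin 2) :
    bitWeight (k + 1) (b + 2 * i) = b + bitWeight k i := by
  simp [bitWeight, Fin.sum_univ_succ, bitVal_zero, bitVal_succ]

lemma pairCount_succ (k i : ℕ) (b : Fin 2) :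
    pairCount (k + 1) (b + 2 * i) = b * bitWeight k i + pairCount k i := by
  simp [pairCount, bitWeight, Finset.sum_filter, Fintype.sum_prod_type, Fin.sum_univ_succ,
    bitVal_zero, bitVal_succ, Finset.mul_sum]

/-- `qubitEquiv` puts the appended qubit in the lowest binary digit. -/
lemma qubitEquiv_val (k : ℕ) (i : Fin (2 ^ k)) (b : Fin 2) :
    ((qubitEquiv k (i, b) : Fin (2 ^ (k + 1))) : ℕ) = b + 2 * i := by
  simp [qubitEquiv]

lemma graphSign_succ (k : ℕ) (i : Fin (2 ^ k)) (b : Fin 2) :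
    graphSign (k + 1) (qubitEquiv k (i, b)) = if b = 0 then graphSign k i else twistSign k i := by
  simp only [graphSign, twistSign, qubitEquiv_val, pairCount_succ]
  fin_cases b <;> simp [add_comm]

lemma twistSign_succ (k : ℕ) (i : Fin (2 ^ k)) (b : Fin 2) :
    twistSign (k + 1) (qubitEquiv k (i, b)) =
      if b = 0 then twistSign k i else -graphSign k i := by
  simp only [graphSign, twistSign, qubitEquiv_val, pairCount_succ, bitWeight_succ]
  fin_cases b
  · simp
  · have h : 1 * bitWeight k i + pairCount k i + (1 + bitWeight k i)
        = pairCount k i + 1 + 2 * bitWeight k i := by ring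
    simp only [Fin.mk_one, h]
    rw [pow_add, pow_mul]
    simp [pow_succ]

/-- The action of a Kronecker product, read through `qubitEquiv`, in block form. -/
lemma kron_mulVec (k : ℕ) (A A' : Matrix (Fin (2 ^ k)) (Fin (2 ^ k)) ℂ)
    (B B' : Matrix (Fin 2) (Fin 2) ℂ) (v : Fin (2 ^ (k + 1)) → ℂ) (i : Fin (2 ^ k)) (b : Fin 2) :
    (Matrix.reindex (qubitEquiv k) (qubitEquiv k)
      ((1/2 : ℂ) • (A ⊗ₖ B) + (1/2 : ℂ) • (A' ⊗ₖ B'))).mulVec v (qubitEquiv k (i, b)) =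
    ∑ c, ((1/2 : ℂ) * B b c * A.mulVec (fun j => v (qubitEquiv k (j, c))) i +
      (1/2 : ℂ) * B' b c * A'.mulVec (fun j => v (qubitEquiv k (j, c))) i) := by
  simp only [Matrix.mulVec, dotProduct]
  rw [← (qubitEquiv k).sum_comp, Fintype.sum_prod_type, Finset.sum_comm]
  refine Finset.sum_congr rfl fun c _ => ?_
  rw [Finset.mul_sum, Finset.mul_sum, ← Finset.sum_add_distrib]
  refine Finset.sum_congr rfl fun j _ => ?_
  simp [Matrix.kroneckerMap_apply]
  ring

/-- The non-primed observables: `X` for the first qubit, `(X + Z)/√2` for the others. -/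
noncomputable def obsA (i : ℕ) : Matrix (Fin 2) (Fin 2) ℂ :=
  if i = 1 then PauliX else (((√2)⁻¹ : ℝ) : ℂ) • PauliX + (((√2)⁻¹ : ℝ) : ℂ) • PauliZ

/-- The primed observables: `Z` for the first qubit, `(Z - X)/√2` for the others. -/
noncomputable def obsA' (i : ℕ) : Matrix (Fin 2) (Fin 2) ℂ :=
  if i = 1 then PauliZ else ((-(√2)⁻¹ : ℝ) : ℂ) • PauliX + (((√2)⁻¹ : ℝ) : ℂ) • PauliZ

lemma isBloch_obsA (i : ℕ) : IsBloch (obsA i) := by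
  by_cases h : i = 1
  · exact ⟨1, 0, 0, by norm_num, by simp [obsA, h]⟩
  · refine ⟨(√2)⁻¹, 0, (√2)⁻¹, ?_, by simp [obsA, h]⟩
    rw [inv_pow, Real.sq_sqrt (by norm_num)]
    norm_num

lemma isBloch_obsA' (i : ℕ) : IsBloch (obsA' i) := by
  by_cases h : i = 1
  · exact ⟨0, 0, 1, by norm_num, by simp [obsA', h]⟩
  · refine ⟨-(√2)⁻¹, 0, (√2)⁻¹, ?_, by simp [obsA', h]⟩
    rw [neg_sq, inv_pow, Real.sq_sqrt (by norm_num)]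
    norm_num

/-- `M` and its primed partner act on `ψ_k` and `φ_k` as `r Z` and `r X` act on the standard
basis of `ℂ²`. -/
structure MerminAction (k : ℕ) (r : ℂ) (M M' : Matrix (Fin (2 ^ k)) (Fin (2 ^ k)) ℂ) : Prop where
  graph : M.mulVec (graphSign k) = r • graphSign k
  twist : M.mulVec (twistSign k) = -r • twistSign k
  graph' : M'.mulVec (graphSign k) = r • twistSign k
  twist' : M'.mulVec (twistSign k) = r • graphSign k

lemma inv_sqrt_two_complex : ((√2 : ℝ) : ℂ)⁻¹ = (√2 : ℝ) / 2 := by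
  rw [← Complex.ofReal_inv, inv_eq_one_div, Real.sqrt_div_self'.symm]
  push_cast
  rfl

/-- The inductive step: each further qubit multiplies the scaling factor by `√2`. -/
lemma mermin_action_step (k : ℕ) (hk : 1 ≤ k) (r : ℂ)
    (M M' : Matrix (Fin (2 ^ k)) (Fin (2 ^ k)) ℂ) (h : MerminAction k r M M') :
    MerminAction (k + 1) (r * (√2 : ℝ))
      (Matrix.reindex (qubitEquiv k) (qubitEquiv k)
        ((1/2 : ℂ) • (M ⊗ₖ (obsA (k+1) + obsA' (k+1))) +
          (1/2 : ℂ) • (M' ⊗ₖ (obsA (k+1) - obsA' (k+1)))))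
      (Matrix.reindex (qubitEquiv k) (qubitEquiv k)
        ((1/2 : ℂ) • (M' ⊗ₖ (obsA' (k+1) + obsA (k+1))) +
          (1/2 : ℂ) • (M ⊗ₖ (obsA' (k+1) - obsA (k+1))))) := by
  obtain ⟨h1, h2, h3, h4⟩ := h
  have hk' : k ≠ 0 := by omega
  have neg_graph (A : Matrix (Fin (2 ^ k)) (Fin (2 ^ k)) ℂ) :
      A.mulVec (fun j => -graphSign k j) = -A.mulVec (graphSign k) := A.mulVec_neg _
  have e1 : (fun j => graphSign k j) = graphSign k := rfl
  have e2 : (fun j => twistSign k j) = twistSign k := rfl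
  constructor <;>
  · ext x
    obtain ⟨⟨i, b⟩, rfl⟩ := (qubitEquiv k).surjective x
    rw [kron_mulVec]
    simp only [Fin.sum_univ_two, graphSign_succ, twistSign_succ, Pi.smul_apply]
    simp only [if_true, one_ne_zero, if_false, e1, e2, neg_graph, h1, h2, h3, h4]
    fin_cases b <;>
      simp [obsA, obsA', hk', PauliX, PauliZ, inv_sqrt_two_complex] <;> ring

lemma mermin_action_one : MerminAction 1 1 (obsA 1) (obsA' 1) := by
  have hp (i : ℕ) : pairCount 1 i = 0 := by
    simp [pairCount]
  have h0 (i : Fin 2) : graphSign 1 i = 1 := by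
    simp [graphSign, hp]
  have h1 (i : Fin 2) : twistSign 1 i = if i = 0 then 1 else -1 := by
    fin_cases i <;> simp [twistSign, hp, bitWeight, bitVal]
  constructor <;>
  · ext (i : Fin 2)
    change ∑ j : Fin 2, _ * _ = _
    fin_cases i <;> simp [Fin.sum_univ_two, h0, h1, obsA, obsA', PauliX, PauliZ]

lemma completeGraphState_eq (n : ℕ) :
    completeGraphState n = ((√(2 ^ n) : ℝ) : ℂ)⁻¹ • graphSign n := by
  ext i
  simp only [completeGraphState, Pi.smul_apply, smul_eq_mul, graphSign, pairCount, bitVal]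
  rw [div_eq_inv_mul]

lemma completeGraphState_norm (n : ℕ) :
    star (completeGraphState n) ⬝ᵥ completeGraphState n = 1 := by
  have h (i : Fin (2 ^ n)) :
      star (completeGraphState n i) * completeGraphState n i = ((2 : ℂ) ^ n)⁻¹ := by
    have hs : ((√(2 ^ n) : ℝ) : ℂ) * ((√(2 ^ n) : ℝ) : ℂ) = 2 ^ n := by
      rw [← Complex.ofReal_mul, Real.mul_self_sqrt (by positivity)]
      push_cast
      rfl
    have hg : (-1 : ℂ) ^ pairCount n i * (-1) ^ pairCount n i = 1 := by
      rw [← mul_pow]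
      simp
    rw [completeGraphState_eq]
    simp only [Pi.smul_apply, smul_eq_mul, graphSign, star_mul', star_inv₀, star_pow, star_neg,
      star_one, Complex.star_def, Complex.conj_ofReal]
    rw [mul_mul_mul_comm, hg, ← mul_inv, hs, mul_one]
  simp only [dotProduct, Pi.star_apply, h]
  simp

/-- For every `n ≥ 2`, the 2-uniform `n`-qubit hypergraph state attains the
maximal quantum value `2^{(n-1)/2}` of Mermin's polynomial `Mₙ` for a suitable
choice of Bloch observables. -/
theorem completeGraphState_attains_max_mermin (n : ℕ) (hn : 2 ≤ n) :
    ∃ a a' : ℕ → Matrix (Fin 2) (Fin 2) ℂ,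
      (∀ i, 1 ≤ i → IsBloch (a i) ∧ IsBloch (a' i)) ∧
      ∀ M M' : (k : ℕ) → Matrix (Fin (2 ^ k)) (Fin (2 ^ k)) ℂ,
        M 1 = a 1 → M' 1 = a' 1 →
        (∀ k, 1 ≤ k → M (k + 1) =
          Matrix.reindex (qubitEquiv k) (qubitEquiv k)
            ((1/2 : ℂ) • (M k ⊗ₖ (a (k+1) + a' (k+1))) +
             (1/2 : ℂ) • (M' k ⊗ₖ (a (k+1) - a' (k+1))))) →
        (∀ k, 1 ≤ k → M' (k + 1) =
          Matrix.reindex (qubitEquiv k) (qubitEquiv k)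
            ((1/2 : ℂ) • (M' k ⊗ₖ (a' (k+1) + a (k+1))) +
             (1/2 : ℂ) • (M k ⊗ₖ (a' (k+1) - a (k+1))))) →
        star (completeGraphState n) ⬝ᵥ (M n).mulVec (completeGraphState n) =
          (((2 : ℝ) ^ (((n : ℝ) - 1) / 2) : ℝ) : ℂ) := by
  refine ⟨obsA, obsA', fun i _ => ⟨isBloch_obsA i, isBloch_obsA' i⟩, ?_⟩
  intro M M' hM hM' hMs hMs'
  have key : ∀ k, MerminAction (k + 1) (((√2 : ℝ) : ℂ) ^ k) (M (k + 1)) (M' (k + 1)) := by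
    intro k
    induction k with
    | zero =>
      rw [pow_zero]
      change MerminAction 1 1 (M 1) (M' 1)
      rw [hM, hM']
      exact mermin_action_one
    | succ k ih =>
      rw [pow_succ, hMs (k + 1) (by omega), hMs' (k + 1) (by omega)]
      exact mermin_action_step (k + 1) (by omega) _ _ _ ih
  obtain ⟨m, rfl⟩ : ∃ m, n = m + 1 := ⟨n - 1, by omega⟩
  have heig : (M (m + 1)).mulVec (completeGraphState (m + 1)) =
      ((√2 : ℝ) : ℂ) ^ m • completeGraphState (m + 1) := by
    rw [completeGraphState_eq, Matrix.mulVec_smul, (key m).graph, smul_comm]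
  rw [heig, dotProduct_smul, completeGraphState_norm, smul_eq_mul, mul_one, ← Complex.ofReal_pow]
  congr 1
  rw [Real.sqrt_eq_rpow, ← Real.rpow_natCast, ← Real.rpow_mul (by norm_num)]
  congr 1
  push_cast
  ring
end
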